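/- Every 5-vertex nondegenerate simplex with vertices among the vertices of Δ^1 × Δ^1 × Δ^2 has an exterior facet, and its class (4! times its volume in reduced coordinates) is at most 2. -/

import Mathlib

/-- A vertex of `Π*_{2,1} = Δ¹ × Δ¹ × Δ²` in standard coordinates: a 0/1 vector with
exactly one 1 in each of the three factors (of sizes 2, 2, 3). -/
def IsVertex21 (x : Fin 2 ⊕ (Fin 2 ⊕ Fin 3) → ℝ) : Prop :=
  (∀ z, x z = 0 ∨ x z = 1) ∧
    x (Sum.inl 0) + x (Sum.inl 1) = 1 ∧
    x (Sum.inr (Sum.inl 0)) + x (Sum.inr (Sum.inl 1)) = 1 ∧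
    x (Sum.inr (Sum.inr 0)) + x (Sum.inr (Sum.inr 1)) + x (Sum.inr (Sum.inr 2)) = 1

/-- The matrix `[1|M_v]` of a 5-vertex simplex in reduced coordinates (dropping the last
coordinate of each factor); the class of the simplex is `|det|`, i.e. `4!` times its
volume in reduced coordinates. -/
def classMat21 (w : Fin 5 → (Fin 2 ⊕ (Fin 2 ⊕ Fin 3) → ℝ)) : Matrix (Fin 5) (Fin 5) ℝ :=
  Matrix.of fun r => ![1, w r (Sum.inl 0), w r (Sum.inr (Sum.inl 0)),
    w r (Sum.inr (Sum.inr 0)), w r (Sum.inr (Sum.inr 1))]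

/-- A 0/1 vector either has at most one nonzero entry or has entry sum at least 2. -/
theorem zero_off_point_or_two_le_sum {ι : Type*} [Fintype ι] [Nonempty ι]
    (f : ι → ℝ) (hf : ∀ r, f r = 0 ∨ f r = 1) :
    (∃ r₀, ∀ r, r ≠ r₀ → f r = 0) ∨ 2 ≤ ∑ r, f r := by
  classical
  by_cases h : ∃ r₀, ∀ r, r ≠ r₀ → f r = 0
  · exact Or.inl h
  right
  push Not at h
  obtain ⟨a, -, ha⟩ := h (Classical.arbitrary ι)
  obtain ⟨b, hba, hb⟩ := h a
  have hsum : ∑ r ∈ {a, b}, f r ≤ ∑ r, f r :=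
    Finset.sum_le_sum_of_subset_of_nonneg (Finset.subset_univ _) fun r _ _ => by
      rcases hf r with h | h <;> rw [h] <;> norm_num
  rw [Finset.sum_pair hba.symm, (hf a).resolve_left ha, (hf b).resolve_left hb] at hsum
  linarith

theorem abs_det_three_le_two {a b c d e f g h i : ℝ}
    (ha : a = 0 ∨ a = 1) (hb : b = 0 ∨ b = 1) (hc : c = 0 ∨ c = 1)
    (hd : d = 0 ∨ d = 1) (he : e = 0 ∨ e = 1) (hf : f = 0 ∨ f = 1)
    (hg : g = 0 ∨ g = 1) (hh : h = 0 ∨ h = 1) (hi : i = 0 ∨ i = 1) :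
    |a * (e * i - f * h) - b * (d * i - f * g) + c * (d * h - e * g)| ≤ 2 := by
  have bounds {x : ℝ} (hx : x = 0 ∨ x = 1) : 0 ≤ x ∧ x ≤ 1 := by
    rcases hx with rfl | rfl <;> norm_num
  obtain ⟨hg₀, hg₁⟩ := bounds hg
  obtain ⟨hh₀, hh₁⟩ := bounds hh
  obtain ⟨hi₀, hi₁⟩ := bounds hi
  rw [abs_le]
  rcases ha with rfl | rfl <;> rcases hb with rfl | rfl <;> rcases hc with rfl | rfl <;>
    rcases hd with rfl | rfl <;> rcases he with rfl | rfl <;> rcases hf with rfl | rfl <;>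
    exact ⟨by linarith, by linarith⟩

/-- Four vertices of the 3-cube span a simplex of class at most 2. -/
theorem abs_det_cube_le_two (A : Matrix (Fin 4) (Fin 4) ℝ) (hone : ∀ r, A r 0 = 1)
    (hA : ∀ r c, A r c = 0 ∨ A r c = 1) : |A.det| ≤ 2 := by
  have flip (r c) : 1 - A r c = 0 ∨ 1 - A r c = 1 := by
    rcases hA r c with h | h <;> rw [h] <;> norm_num
  have hdet : A.det =
      (A 1 1 - A 0 1) * ((A 2 2 - A 0 2) * (A 3 3 - A 0 3) - (A 2 3 - A 0 3) * (A 3 2 - A 0 2))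
      - (A 1 2 - A 0 2) * ((A 2 1 - A 0 1) * (A 3 3 - A 0 3) - (A 2 3 - A 0 3) * (A 3 1 - A 0 1))
      + (A 1 3 - A 0 3) *
        ((A 2 1 - A 0 1) * (A 3 2 - A 0 2) - (A 2 2 - A 0 2) * (A 3 1 - A 0 1)) := by
    rw [Matrix.det_succ_column_zero]
    simp [Fin.sum_univ_succ, Matrix.det_fin_three, hone, Fin.succAbove]
    ring
  -- Reflecting coordinates moves vertex 0 to the origin and changes the determinant by a sign.
  have key (x y z : Fin 4 → ℝ) (hx : ∀ r, x r = 0 ∨ x r = 1)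
      (hy : ∀ r, y r = 0 ∨ y r = 1) (hz : ∀ r, z r = 0 ∨ z r = 1) :=
    abs_le.mp (abs_det_three_le_two (hx 1) (hy 1) (hz 1) (hx 2) (hy 2) (hz 2)
      (hx 3) (hy 3) (hz 3))
  have choose_flip (c : Fin 4) : ∃ x : Fin 4 → ℝ, (∀ r, x r = 0 ∨ x r = 1) ∧
      ((∀ r, A r c - A 0 c = x r) ∨ ∀ r, A r c - A 0 c = -x r) := by
    rcases hA 0 c with h | h
    · exact ⟨fun r => A r c, fun r => hA r c, Or.inl fun r => by rw [h, sub_zero]⟩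
    · exact ⟨fun r => 1 - A r c, fun r => flip r c, Or.inr fun r => by rw [h, neg_sub]⟩
  obtain ⟨x, hx, hx'⟩ := choose_flip 1
  obtain ⟨y, hy, hy'⟩ := choose_flip 2
  obtain ⟨z, hz, hz'⟩ := choose_flip 3
  obtain ⟨hl, hu⟩ := key x y z hx hy hz
  rw [hdet, abs_le]
  rcases hx' with hx' | hx' <;> rcases hy' with hy' | hy' <;> rcases hz' with hz' | hz' <;>
    simp only [hx', hy', hz'] <;> constructor <;> linarith

/-- If one coordinate vanishes at four of the five vertices, the class is at most the class
of the facet they span. -/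
theorem abs_det_le_two_of_sparse_column (M : Matrix (Fin 5) (Fin 5) ℝ)
    (hone : ∀ r, M r 0 = 1) (hM : ∀ r c, M r c = 0 ∨ M r c = 1) {j : Fin 5} (hj : j ≠ 0)
    (hsparse : ∃ r₀, ∀ r, r ≠ r₀ → M r j = 0) : |M.det| ≤ 2 := by
  obtain ⟨r₀, hr₀⟩ := hsparse
  have hminor : |(M.submatrix r₀.succAbove j.succAbove).det| ≤ 2 :=
    abs_det_cube_le_two _
      (fun r => by rw [Matrix.submatrix_apply, Fin.succAbove_ne_zero_zero hj, hone])
      fun r c => hM _ _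
  rw [Matrix.det_succ_column M j,
    Finset.sum_eq_single r₀ (fun r _ hr => by rw [hr₀ r hr]; ring) (by simp),
    abs_mul, abs_mul, abs_pow, abs_neg, abs_one, one_pow, one_mul]
  rcases hM r₀ j with h | h <;> rw [h]
  · norm_num
  · simpa using hminor

/-- Every 5-vertex nondegenerate simplex with vertices among the vertices of
`Δ¹ × Δ¹ × Δ²` has an exterior facet (4 of its vertices share a zero coordinate),
and its class is at most 2. -/
theorem stmt16 (w : Fin 5 → (Fin 2 ⊕ (Fin 2 ⊕ Fin 3) → ℝ))
    (hv : ∀ r, IsVertex21 (w r)) (hindep : AffineIndependent ℝ w) :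
    (∃ z : Fin 2 ⊕ (Fin 2 ⊕ Fin 3), ∃ S : Finset (Fin 5),
      S.card = 4 ∧ ∀ r ∈ S, w r z = 0) ∧
    |(classMat21 w).det| ≤ 2 := by
  have hsparse : ∃ k : Fin 3, ∃ r₀, ∀ r, r ≠ r₀ → w r (Sum.inr (Sum.inr k)) = 0 := by
    by_contra hno
    have htwo (k : Fin 3) : 2 ≤ ∑ r, w r (Sum.inr (Sum.inr k)) :=
      (zero_off_point_or_two_le_sum _ fun r => (hv r).1 _).resolve_left fun h => hno ⟨k, h⟩
    have htotal : ∑ r, (w r (Sum.inr (Sum.inr 0)) + w r (Sum.inr (Sum.inr 1)) +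
        w r (Sum.inr (Sum.inr 2))) = 5 := by
      rw [Finset.sum_congr rfl fun r _ => (hv r).2.2.2]
      norm_num
    rw [Finset.sum_add_distrib, Finset.sum_add_distrib] at htotal
    linarith [htwo 0, htwo 1, htwo 2]
  obtain ⟨k, hk⟩ := hsparse
  constructor
  · obtain ⟨r₀, hr₀⟩ := hk
    exact ⟨Sum.inr (Sum.inr k), Finset.univ.erase r₀, by simp,
      fun r hr => hr₀ r (Finset.ne_of_mem_erase hr)⟩
  have hentry (r c) : classMat21 w r c = 0 ∨ classMat21 w r c = 1 := by
    fin_cases c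
    · exact Or.inr rfl
    all_goals exact (hv r).1 _
  fin_cases k
  · exact abs_det_le_two_of_sparse_column _ (fun _ => rfl) hentry (j := 3) (by decide) hk
  · exact abs_det_le_two_of_sparse_column _ (fun _ => rfl) hentry (j := 4) (by decide) hk
  · -- Replace the first triangle coordinate by the last one.
    let T : Matrix (Fin 5) (Fin 5) ℝ :=
      !![1, 0, 0, 1, 0; 0, 1, 0, 0, 0; 0, 0, 1, 0, 0; 0, 0, 0, -1, 0; 0, 0, 0, -1, 1]
    have hT : T.det = -1 := by
      simp [T, Matrix.det_succ_row_zero, Fin.sum_univ_succ, Fin.succAbove]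
    have hcol (r) : (classMat21 w * T) r 3 = w r (Sum.inr (Sum.inr 2)) := by
      have := (hv r).2.2.2
      simp [T, Matrix.mul_apply, Fin.sum_univ_succ, classMat21]
      linarith
    have hother (r) {c : Fin 5} (hc : c ≠ 3) : (classMat21 w * T) r c = classMat21 w r c := by
      fin_cases c <;> simp_all [T, Matrix.mul_apply, Fin.sum_univ_succ]
    have hdet : |(classMat21 w * T).det| ≤ 2 := by
      refine abs_det_le_two_of_sparse_column _ (fun r => hother r (by decide)) (fun r c => ?_)
        (j := 3) (by decide) (by simp only [hcol]; exact hk)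
      by_cases hc : c = 3
      · rw [hc, hcol]
        exact (hv r).1 _
      · rw [hother r hc]
        exact hentry r c
    simpa [Matrix.det_mul, hT] using hdet
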